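/- Let Y ~ N(0,1) and w > 0 with w ≤ ε²/(2 log(2/δ)) for some ε ∈ (0,1] and δ ∈ (0,1/2]. Then ε/√w - √w/2 > 0 and P(√w·Y + w/2 > ε) ≤ δ. -/

import Mathlib

open MeasureTheory ProbabilityTheory

/-!
Dividing by `√w`, the event is `{t < Y}` with `t = ε / √w - √w / 2`, and the Chernoff bound for
the sub-Gaussian variable `Y` gives it probability at most `exp (-t ^ 2 / 2)`. Since
`t ^ 2 = ε ^ 2 / w - ε + w / 4`, the constraint `w ≤ ε ^ 2 / (2 * L)` makes this at most
`exp (ε / 2 - L)`. For `L = log (2 / δ)` the latter is `exp (ε / 2) / 2 * δ`: the `2` inside the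
logarithm pays for the factor `exp (ε / 2)`, as long as `ε ≤ 2 * log 2`.
-/

open scoped NNReal

section Threshold

variable {w ε : ℝ}

lemma div_sqrt_sub_half_sqrt_pos_iff (hw : 0 < w) :
    0 < ε / √w - √w / 2 ↔ w < 2 * ε := by
  rw [sub_pos, lt_div_iff₀ (Real.sqrt_pos.2 hw), div_mul_eq_mul_div, Real.mul_self_sqrt hw.le,
    div_lt_iff₀' two_pos]

lemma lt_sqrt_mul_add_half_iff (hw : 0 < w) (y : ℝ) :
    ε < √w * y + w / 2 ↔ ε / √w - √w / 2 < y := by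
  rw [sub_lt_iff_lt_add, div_lt_iff₀ (Real.sqrt_pos.2 hw), add_mul, div_mul_eq_mul_div,
    Real.mul_self_sqrt hw.le, mul_comm y]

lemma div_sqrt_sub_half_sqrt_sq (hw : 0 < w) :
    (ε / √w - √w / 2) ^ 2 = ε ^ 2 / w - ε + w / 4 := by
  have hs : √w ≠ 0 := (Real.sqrt_pos.2 hw).ne'
  calc (ε / √w - √w / 2) ^ 2 = ε ^ 2 / √w ^ 2 - ε + √w ^ 2 / 4 := by field
    _ = ε ^ 2 / w - ε + w / 4 := by rw [Real.sq_sqrt hw.le]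

lemma lt_two_mul_of_le_sq_div {L : ℝ} (hε : 0 < ε) (hεL : ε < 4 * L)
    (hwL : w ≤ ε ^ 2 / (2 * L)) : w < 2 * ε := by
  refine hwL.trans_lt ((div_lt_iff₀ (by linarith)).2 ?_)
  calc ε ^ 2 = ε * ε := sq ε
    _ < ε * (4 * L) := by gcongr
    _ = 2 * ε * (2 * L) := by ring

end Threshold

lemma exp_half_sub_log_two_div_le {ε δ : ℝ} (hε : ε ≤ 2 * Real.log 2) (hδ : 0 < δ) :
    Real.exp (ε / 2 - Real.log (2 / δ)) ≤ δ := by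
  rw [← Real.le_log_iff_exp_le hδ, Real.log_div two_ne_zero hδ.ne']
  linarith

section SubGaussian

variable {Ω : Type*} {mΩ : MeasurableSpace Ω} {μ : Measure Ω} {Y : Ω → ℝ}

lemma hasSubgaussianMGF_of_map_eq_gaussianReal {v : ℝ≥0} (hY : μ.map Y = gaussianReal 0 v) :
    HasSubgaussianMGF Y v μ where
  integrable_exp_mul t := by
    have hY_meas : AEMeasurable Y μ := aemeasurable_of_map_neZero (by rw [hY]; infer_instance)
    have h_int : Integrable (fun y ↦ Real.exp (t * y)) (μ.map Y) :=
      hY ▸ integrable_exp_mul_gaussianReal t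
    exact h_int.comp_aemeasurable hY_meas
  mgf_le t := by rw [mgf_gaussianReal hY, zero_mul, zero_add]

lemma isFiniteMeasure_of_hasSubgaussianMGF {c : ℝ≥0} (hY : HasSubgaussianMGF Y c μ) :
    IsFiniteMeasure μ := by
  simpa [integrable_const_iff] using hY.integrable_exp_mul 0

lemma measureReal_lt_sqrt_mul_add_half_le_exp {w ε L : ℝ} (hY : HasSubgaussianMGF Y 1 μ)
    (hw : 0 < w) (hL : 0 < L) (hwε : w < 2 * ε) (hwL : w ≤ ε ^ 2 / (2 * L)) :
    μ.real {ω | ε < √w * Y ω + w / 2} ≤ Real.exp (ε / 2 - L) := by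
  have := isFiniteMeasure_of_hasSubgaussianMGF hY
  set t := ε / √w - √w / 2 with ht
  have ht_pos : 0 < t := (div_sqrt_sub_half_sqrt_pos_iff hw).2 hwε
  have hLw : 2 * L ≤ ε ^ 2 / w := (le_div_comm₀ hw (by positivity)).1 hwL
  calc μ.real {ω | ε < √w * Y ω + w / 2}
      ≤ μ.real {ω | t ≤ Y ω} :=
        measureReal_mono fun ω hω ↦ ((lt_sqrt_mul_add_half_iff hw (Y ω)).1 hω).le
    _ ≤ Real.exp (-t ^ 2 / 2) := by simpa using hY.measure_ge_le ht_pos.le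
    _ ≤ Real.exp (ε / 2 - L) := by
        rw [Real.exp_le_exp, ht, div_sqrt_sub_half_sqrt_sq hw]
        linarith

theorem gaussian_likelihood_ratio_tail_general {w ε δ : ℝ} (hY : HasSubgaussianMGF Y 1 μ)
    (hw : 0 < w) (hε : 0 < ε ∧ ε ≤ 2 * Real.log 2) (hδ : 0 < δ ∧ δ ≤ 1)
    (hwb : w ≤ ε ^ 2 / (2 * Real.log (2 / δ))) :
    0 < ε / √w - √w / 2 ∧ μ {ω | ε < √w * Y ω + w / 2} ≤ ENNReal.ofReal δ := by
  obtain ⟨hε_pos, hε_le⟩ := hε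
  obtain ⟨hδ_pos, hδ_le⟩ := hδ
  have := isFiniteMeasure_of_hasSubgaussianMGF hY
  have hlog_two : 0 < Real.log 2 := Real.log_pos one_lt_two
  have hlog : Real.log 2 ≤ Real.log (2 / δ) :=
    Real.log_le_log two_pos (le_div_self zero_le_two hδ_pos hδ_le)
  have hwε : w < 2 * ε := lt_two_mul_of_le_sq_div hε_pos (by linarith) hwb
  refine ⟨(div_sqrt_sub_half_sqrt_pos_iff hw).2 hwε, ?_⟩
  rw [← ofReal_measureReal]
  exact ENNReal.ofReal_le_ofReal <|
    (measureReal_lt_sqrt_mul_add_half_le_exp hY hw (hlog_two.trans_le hlog) hwε hwb).trans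
      (exp_half_sub_log_two_div_le hε_le hδ_pos)

end SubGaussian

/-- Core DP calculation: if `Y ~ N(0,1)`, `0 < w ≤ ε²/(2 log(2/δ))` with `ε ∈ (0,1]`,
`δ ∈ (0,1/2]`, then `ε/√w - √w/2 > 0` and `P(√w·Y + w/2 > ε) ≤ δ`. -/
theorem gaussian_likelihood_ratio_tail (w ε δ : ℝ)
    (hw : 0 < w) (hε : 0 < ε ∧ ε ≤ 1) (hδ : 0 < δ ∧ δ ≤ 1/2)
    (hwb : w ≤ ε^2 / (2 * Real.log (2/δ))) :
    0 < ε / Real.sqrt w - Real.sqrt w / 2 ∧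
    (gaussianReal 0 1) {y : ℝ | ε < Real.sqrt w * y + w / 2} ≤ ENNReal.ofReal δ :=
  gaussian_likelihood_ratio_tail_general (hasSubgaussianMGF_of_map_eq_gaussianReal Measure.map_id')
    hw ⟨hε.1, by linarith [Real.log_two_gt_d9]⟩ ⟨hδ.1, by linarith⟩ hwb
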